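/- Consider ẋ(t) = F(t, C̃x_t) in ℝⁿ, where F satisfies (L2) with Lipschitz constant Λ computed with respect to the Euclidean norms, and C̃φ = (∫_{−τ}^0 φ_{j₁}(θ)dμ₁(θ), …, ∫_{−τ}^0 φ_{j_r}(θ)dμ_r(θ)) with Borel signed measures μ_k on [−τ,0] of total variation ≤ 1 and integers 1 ≤ j₁ ≤ … ≤ j_r ≤ n. Suppose e·√r·√(1 + e^{−2}r^{−1})·τ < Λ^{−1}. Then for the Lur'e form ẋ(t) = Âx_t + B̂F̂(t, Ĉx_t), with ν := τ^{−1}, the transfer matrix Ŵ(p) = γ̂(p)(a − p)⁻¹ satisfies the spectral-norm bound |Ŵ(−ν + iω)|₂ ≤ √(r e² + 1)·τ for all ω ∈ ℝ and all a ≥ 0; consequently, for all sufficiently small a > 0, the Smith frequency condition |Ŵ(−τ^{−1}+iω)|₂ < (Λ+a)^{−1} holds for all ω ∈ ℝ, the characteristic equation of the linear part (a−p)ⁿ = 0 has exactly n roots (p = a, with multiplicity n) with Re p > −τ^{−1} and none on the line Re p = −τ^{−1}, so the quadratic Lyapunov functional theorem applies with j = n and ν = τ^{−1} and the quadratic form 𝓕(v,ξ)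 := (Λ+a)²|Ĉv|² − |ξ|². -/

import Mathlib

open MeasureTheory Filter Topology Matrix

noncomputable section

namespace DelaySmallDelays

/-- Real part of the scalar exponential segment `θ ↦ e^{pθ}` on `[-τ, 0]`. -/
def expReSc (τ : ℝ) (p : ℂ) : C(Set.Icc (-τ) (0:ℝ), ℝ) :=
  ⟨fun θ => (Complex.exp (p * (θ : ℝ))).re,
    Complex.continuous_re.comp (Complex.continuous_exp.comp
      (continuous_const.mul (Complex.continuous_ofReal.comp continuous_subtype_val)))⟩

/-- Imaginary part of the scalar exponential segment `θ ↦ e^{pθ}` on `[-τ, 0]`. -/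
def expImSc (τ : ℝ) (p : ℂ) : C(Set.Icc (-τ) (0:ℝ), ℝ) :=
  ⟨fun θ => (Complex.exp (p * (θ : ℝ))).im,
    Complex.continuous_im.comp (Complex.continuous_exp.comp
      (continuous_const.mul (Complex.continuous_ofReal.comp continuous_subtype_val)))⟩

/-- The complex moment `∫_{-τ}^0 e^{pθ} dμ(θ)` of a (signed) measure `μ` on `[-τ, 0]`,
realized (via Riesz representation) as a bounded linear functional on `C([-τ, 0]; ℝ)`. -/
def moment (τ : ℝ) (μ : C(Set.Icc (-τ) (0:ℝ), ℝ) →L[ℝ] ℝ) (p : ℂ) : ℂ :=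
  (μ (expReSc τ p) : ℂ) + Complex.I * (μ (expImSc τ p) : ℂ)

/-- The matrix `γ̂(p)`: its `k`-th row (`k ≤ r`) has the single nonzero entry
`∫_{-τ}^0 e^{pθ} dμ_k(θ)` in column `j_k`, and its last `n` rows form the identity. -/
def gammaHat (τ : ℝ) {n r : ℕ} (μs : Fin r → (C(Set.Icc (-τ) (0:ℝ), ℝ) →L[ℝ] ℝ))
    (jdx : Fin r → Fin n) (p : ℂ) : Matrix (Fin r ⊕ Fin n) (Fin n) ℂ :=
  Matrix.of fun k j =>
    Sum.elim (fun k' => if j = jdx k' then moment τ (μs k') p else 0)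
      (fun i => if j = i then 1 else 0) k

/-- The spectral (operator) norm of a complex matrix with respect to Euclidean norms. -/
def specNorm {α β : Type*} [Fintype α] [Fintype β] [DecidableEq β]
    (Mx : Matrix α β ℂ) : ℝ :=
  ‖LinearMap.toContinuousLinearMap (Matrix.toEuclideanLin Mx)‖

/-- The transfer matrix `Ŵ(p) = γ̂(p) (a - p)⁻¹` of the Lur'e form, at `p = -τ⁻¹ + iω`. -/
def What (τ : ℝ) {n r : ℕ} (μs : Fin r → (C(Set.Icc (-τ) (0:ℝ), ℝ) →L[ℝ] ℝ))
    (jdx : Fin r → Fin n) (a ω : ℝ) : Matrix (Fin r ⊕ Fin n) (Fin n) ℂ :=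
  ((a : ℂ) - (((-τ⁻¹ : ℝ) : ℂ) + ω * Complex.I))⁻¹ •
    gammaHat τ μs jdx (((-τ⁻¹ : ℝ) : ℂ) + ω * Complex.I)

/-!
On the line `Re p = -τ⁻¹` the segment `θ ↦ e^{pθ}` has modulus at most `e` on `[-τ, 0]`, hence so
does each moment, and stacking `r` such rows over the identity gives a matrix of norm at most
`√(r e² + 1)`. Since `a ≥ 0`, the scalar `(a - p)⁻¹` contributes at most `τ`. The smallness
condition says that `√(r e² + 1) τ < Λ⁻¹`, a strict inequality, which survives replacing `Λ` by
`Λ + a` for small `a`.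
-/

lemma norm_apply_add_I_mul_apply_le {X : Type*} [TopologicalSpace X] [CompactSpace X]
    (μ : C(X, ℝ) →L[ℝ] ℝ) {u v : C(X, ℝ)} {c : ℝ} (hc : 0 ≤ c)
    (huv : ∀ x, ‖(u x : ℂ) + Complex.I * (v x : ℂ)‖ ≤ c) :
    ‖(μ u : ℂ) + Complex.I * (μ v : ℂ)‖ ≤ ‖μ‖ * c := by
  set m : ℂ := (μ u : ℂ) + Complex.I * (μ v : ℂ) with hm
  have hre : m.re = μ u := by simp [hm]
  have him : m.im = μ v := by simp [hm]
  -- `μ` is only real linear, so it is applied to the real part of `conj m * (u + i v)`.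
  have norm_rotated_le : ‖m.re • u + m.im • v‖ ≤ ‖m‖ * c := by
    refine (ContinuousMap.norm_le _ (by positivity)).2 fun x => ?_
    have rotated_eq :
        (m.re • u + m.im • v) x = (star m * ((u x : ℂ) + Complex.I * (v x : ℂ))).re := by
      simp
    calc ‖(m.re • u + m.im • v) x‖
        ≤ ‖star m * ((u x : ℂ) + Complex.I * (v x : ℂ))‖ := by
          rw [rotated_eq, Real.norm_eq_abs]
          exact Complex.abs_re_le_norm _
      _ ≤ ‖m‖ * c := by
          rw [norm_mul, norm_star]
          gcongr
          exact huv x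
  have norm_sq_le : ‖m‖ * ‖m‖ ≤ ‖m‖ * (‖μ‖ * c) :=
    calc ‖m‖ * ‖m‖ = μ (m.re • u + m.im • v) := by
          rw [Complex.norm_mul_self_eq_normSq, Complex.normSq_apply, map_add, map_smul, map_smul,
            hre, him, smul_eq_mul, smul_eq_mul]
      _ ≤ ‖μ‖ * ‖m.re • u + m.im • v‖ := (le_abs_self _).trans (μ.le_opNorm _)
      _ ≤ ‖μ‖ * (‖m‖ * c) := by gcongr
      _ = ‖m‖ * (‖μ‖ * c) := by ring
  rcases (norm_nonneg m).eq_or_lt with hm_zero | hm_pos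
  · rw [← hm_zero]
    positivity
  · exact le_of_mul_le_mul_left norm_sq_le hm_pos

lemma norm_inv_sub_le {z w : ℂ} (h : w.re < z.re) : ‖(z - w)⁻¹‖ ≤ (z.re - w.re)⁻¹ := by
  rw [norm_inv]
  exact inv_anti₀ (sub_pos.2 h) (Complex.re_le_norm (z - w))

lemma mul_sqrt_mul_sqrt_one_add_inv {x y : ℝ} (hx : 0 < x) (hy : 0 < y) :
    x * √y * √(1 + (x ^ 2)⁻¹ * y⁻¹) = √(y * x ^ 2 + 1) := by
  calc x * √y * √(1 + (x ^ 2)⁻¹ * y⁻¹)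
      = √(x ^ 2 * y * (1 + (x ^ 2)⁻¹ * y⁻¹)) := by
        rw [Real.sqrt_mul (by positivity), Real.sqrt_mul (by positivity), Real.sqrt_sq hx.le]
    _ = √(y * x ^ 2 + 1) := by
        congr 1
        field_simp

lemma specNorm_smul {α β : Type*} [Fintype α] [Fintype β] [DecidableEq β] (c : ℂ)
    (M : Matrix α β ℂ) : specNorm (c • M) = ‖c‖ * specNorm M := by
  rw [specNorm, map_smul, map_smul, norm_smul, specNorm]

lemma norm_moment_le (τ : ℝ) (μ : C(Set.Icc (-τ) (0 : ℝ), ℝ) →L[ℝ] ℝ) {p : ℂ} (hp : p.re ≤ 0) :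
    ‖moment τ μ p‖ ≤ ‖μ‖ * Real.exp (-τ * p.re) := by
  refine norm_apply_add_I_mul_apply_le μ (Real.exp_pos _).le fun θ => ?_
  have segment_eq : (expReSc τ p θ : ℂ) + Complex.I * (expImSc τ p θ : ℂ)
      = Complex.exp (p * ((θ : ℝ) : ℂ)) := by
    rw [mul_comm Complex.I]
    exact Complex.re_add_im _
  rw [segment_eq, Complex.norm_exp, Complex.re_mul_ofReal, mul_comm p.re]
  exact Real.exp_le_exp.2 (mul_le_mul_of_nonpos_right θ.2.1 hp)

section TransferMatrix

variable (τ : ℝ) {n r : ℕ} (μs : Fin r → (C(Set.Icc (-τ) (0 : ℝ), ℝ) →L[ℝ] ℝ))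
  (jdx : Fin r → Fin n)

lemma gammaHat_mulVec (p : ℂ) (x : Fin n → ℂ) :
    gammaHat τ μs jdx p *ᵥ x = Sum.elim (fun k => moment τ (μs k) p * x (jdx k)) x := by
  ext (k | i) <;> simp [gammaHat, Matrix.mulVec, dotProduct]

lemma specNorm_gammaHat_le (p : ℂ) :
    specNorm (gammaHat τ μs jdx p) ≤ √(∑ k, ‖moment τ (μs k) p‖ ^ 2 + 1) := by
  refine ContinuousLinearMap.opNorm_le_bound _ (Real.sqrt_nonneg _) fun x => ?_
  have row_le (k : Fin r) : ‖moment τ (μs k) p * x (jdx k)‖ ^ 2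
      ≤ ‖moment τ (μs k) p‖ ^ 2 * ‖x‖ ^ 2 := by
    rw [norm_mul, mul_pow]
    gcongr
    exact PiLp.norm_apply_le x (jdx k)
  refine le_of_sq_le_sq ?_ (by positivity)
  calc ‖Matrix.toEuclideanLin (gammaHat τ μs jdx p) x‖ ^ 2
      = ∑ k, ‖moment τ (μs k) p * x (jdx k)‖ ^ 2 + ‖x‖ ^ 2 := by
        simp only [EuclideanSpace.norm_sq_eq, Matrix.toLpLin_apply, gammaHat_mulVec,
          Fintype.sum_sum_type, Sum.elim_inl, Sum.elim_inr]
    _ ≤ ∑ k, ‖moment τ (μs k) p‖ ^ 2 * ‖x‖ ^ 2 + ‖x‖ ^ 2 := by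
        gcongr with k
        exact row_le k
    _ = (√(∑ k, ‖moment τ (μs k) p‖ ^ 2 + 1) * ‖x‖) ^ 2 := by
        rw [mul_pow, Real.sq_sqrt (by positivity), add_mul, one_mul, Finset.sum_mul]

variable {τ μs}

lemma norm_moment_le_exp_one (hτ : 0 < τ) {μ : C(Set.Icc (-τ) (0 : ℝ), ℝ) →L[ℝ] ℝ}
    (hμ : ‖μ‖ ≤ 1) {p : ℂ} (hp : p.re = -τ⁻¹) : ‖moment τ μ p‖ ≤ Real.exp 1 :=
  calc ‖moment τ μ p‖ ≤ ‖μ‖ * Real.exp (-τ * p.re) :=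
        norm_moment_le τ μ (by rw [hp]; exact (neg_neg_of_pos (inv_pos.2 hτ)).le)
    _ ≤ 1 * Real.exp (-τ * p.re) := by gcongr
    _ = Real.exp 1 := by rw [one_mul, hp, neg_mul_neg, mul_inv_cancel₀ hτ.ne']

lemma specNorm_what_le (hτ : 0 < τ) (hμs : ∀ k, ‖μs k‖ ≤ 1) {a : ℝ} (ha : 0 ≤ a) (ω : ℝ) :
    specNorm (What τ μs jdx a ω) ≤ √(r * Real.exp 1 ^ 2 + 1) * τ := by
  set p : ℂ := ((-τ⁻¹ : ℝ) : ℂ) + ω * Complex.I with hp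
  have hp_re : p.re = -τ⁻¹ := by simp [hp]
  have hν : 0 < τ⁻¹ := inv_pos.2 hτ
  have resolvent_le : ‖((a : ℂ) - p)⁻¹‖ ≤ τ :=
    calc ‖((a : ℂ) - p)⁻¹‖ ≤ (a - p.re)⁻¹ :=
          norm_inv_sub_le (by rw [hp_re, Complex.ofReal_re]; linarith)
      _ ≤ τ := inv_le_of_inv_le₀ hτ (by rw [hp_re]; linarith)
  have gammaHat_le : specNorm (gammaHat τ μs jdx p) ≤ √(r * Real.exp 1 ^ 2 + 1) := by
    refine (specNorm_gammaHat_le τ μs jdx p).trans (Real.sqrt_le_sqrt ?_)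
    gcongr
    calc ∑ k, ‖moment τ (μs k) p‖ ^ 2 ≤ ∑ _k : Fin r, Real.exp 1 ^ 2 := by
          gcongr with k
          exact norm_moment_le_exp_one hτ (hμs k) hp_re
      _ = r * Real.exp 1 ^ 2 := by simp
  calc specNorm (What τ μs jdx a ω) = specNorm (gammaHat τ μs jdx p) * ‖((a : ℂ) - p)⁻¹‖ := by
        rw [What, specNorm_smul, mul_comm]
    _ ≤ √(r * Real.exp 1 ^ 2 + 1) * τ := by gcongr

end TransferMatrix

/-- Theorem 5.5 of the paper: for `ẋ(t) = F(t, C̃x_t)` with `F`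
satisfying (L2) (Euclidean Lipschitz constant `Λ`), `C̃` built from measures `μ_k` of total
variation `≤ 1` and coordinates `j_k`, if `e √r √(1 + e⁻²r⁻¹) τ < Λ⁻¹` then for the Lur'e
form with `ν = τ⁻¹` the transfer matrix satisfies `|Ŵ(-ν + iω)|₂ ≤ √(re² + 1) τ` for all
`ω ∈ ℝ` and `a ≥ 0`; consequently for all sufficiently small `a > 0` the Smith frequency
condition `|Ŵ(-τ⁻¹ + iω)|₂ < (Λ + a)⁻¹` holds for all `ω`, and the characteristic equation
`(a - p)ⁿ = 0` has exactly `n` roots (`p = a`, with multiplicity `n`), all with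
`Re p > -τ⁻¹`, and none on the line `Re p = -τ⁻¹`. -/
theorem statement17 (τ : ℝ) (hτ : 0 < τ) (n r : ℕ) (hn : 0 < n) (hr : 0 < r)
    (μs : Fin r → (C(Set.Icc (-τ) (0:ℝ), ℝ) →L[ℝ] ℝ))
    (hμs : ∀ k, ‖μs k‖ ≤ 1)
    (jdx : Fin r → Fin n) (hjdx : Monotone jdx)
    (F : ℝ → EuclideanSpace ℝ (Fin r) → EuclideanSpace ℝ (Fin n))
    (hFcont : Continuous fun q : ℝ × EuclideanSpace ℝ (Fin r) => F q.1 q.2)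
    (Λ : ℝ) (hΛ : 0 < Λ)
    (hFlip : ∀ (t : ℝ) (σ₁ σ₂ : EuclideanSpace ℝ (Fin r)),
      ‖F t σ₁ - F t σ₂‖ ≤ Λ * ‖σ₁ - σ₂‖)
    (hsmall : Real.exp 1 * Real.sqrt r *
        Real.sqrt (1 + ((Real.exp 1) ^ 2)⁻¹ * (r : ℝ)⁻¹) * τ < Λ⁻¹) :
    (∀ a : ℝ, 0 ≤ a → ∀ ω : ℝ,
      specNorm (What τ μs jdx a ω) ≤ Real.sqrt ((r : ℝ) * (Real.exp 1) ^ 2 + 1) * τ) ∧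
    ∃ a₀ > (0:ℝ), ∀ a : ℝ, 0 < a → a ≤ a₀ →
      (∀ ω : ℝ, specNorm (What τ μs jdx a ω) < (Λ + a)⁻¹) ∧
      (-τ⁻¹ < a) ∧
      (∀ p : ℂ, ((a : ℂ) - p) ^ n = 0 → p = (a : ℂ)) ∧
      (∀ ω : ℝ, ((a : ℂ) - (((-τ⁻¹ : ℝ) : ℂ) + ω * Complex.I)) ^ n ≠ 0) := by
  rw [mul_sqrt_mul_sqrt_one_add_inv (Real.exp_pos 1) (Nat.cast_pos.2 hr)] at hsmall
  have what_le {a : ℝ} (ha : 0 ≤ a) (ω : ℝ) := specNorm_what_le jdx hτ hμs ha ω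
  refine ⟨fun a ha ω => what_le ha ω, ?_⟩
  set S := √((r : ℝ) * Real.exp 1 ^ 2 + 1) * τ
  have hS : 0 < S := by positivity
  obtain ⟨b, hΛb, hbS⟩ : ∃ b, Λ < b ∧ b < S⁻¹ := exists_between ((lt_inv_comm₀ hS hΛ).1 hsmall)
  refine ⟨b - Λ, sub_pos.2 hΛb, fun a ha hab => ?_⟩
  have line_lt : -τ⁻¹ < a := (neg_neg_of_pos (inv_pos.2 hτ)).trans ha
  refine ⟨fun ω => ?_, line_lt, fun p hroot => ?_, fun ω hroot => ?_⟩
  · exact (what_le ha.le ω).trans_lt ((lt_inv_comm₀ (by positivity) hS).1 (by linarith))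
  · exact (sub_eq_zero.1 (eq_zero_of_pow_eq_zero hroot)).symm
  · have a_eq : a = -τ⁻¹ := by
      simpa using congrArg Complex.re (sub_eq_zero.1 (eq_zero_of_pow_eq_zero hroot))
    exact line_lt.ne' a_eq

end DelaySmallDelays
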